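/- Let c : ℤ^d → ℤ be a sparse configuration annihilated by the product φψ of two line polynomials φ and ψ in non-parallel directions v and u respectively. Then c = c_1 + c_2 where c_1 is a finite sum of periodic v-fibers with φc_1 = 0, and c_2 is a finite sum of periodic u-fibers with ψc_2 = 0. -/

import Mathlib

namespace PaperFormal

/-- View an integer vector inside `ℝ^d`. -/
def intVecR {d : ℕ} (u : Fin d → ℤ) : Fin d → ℝ := fun i => (u i : ℝ)

/-- View an integer vector inside `ℚ^d`. -/
def intVecQ {d : ℕ} (u : Fin d → ℤ) : Fin d → ℚ := fun i => (u i : ℚ)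

/-- A (Laurent) polynomial: a finitely supported integer-valued function on `ℤ^d`. -/
def IsPoly {d : ℕ} (f : (Fin d → ℤ) → ℤ) : Prop := (Function.support f).Finite

/-- The product `(fc)(u) = ∑_v f(v) · c(u − v)` of a polynomial `f` with `c : ℤ^d → ℤ`. -/
noncomputable def polyApply {d : ℕ} (f : (Fin d → ℤ) → ℤ) (c : (Fin d → ℤ) → ℤ) :
    (Fin d → ℤ) → ℤ := fun u => ∑ᶠ v, f v * c (u - v)

/-- The product `(fc)(u) = ∑_v f(v) · c(u − v)` of a polynomial `f` with `c : ℤ^d → ℂ`. -/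
noncomputable def polyApplyC {d : ℕ} (f : (Fin d → ℤ) → ℤ) (c : (Fin d → ℤ) → ℂ) :
    (Fin d → ℤ) → ℂ := fun u => ∑ᶠ v, (f v : ℂ) * c (u - v)

/-- `c` is `v`-periodic: `c(u + v) = c(u)` for all `u`. -/
def Periodic {d : ℕ} (c : (Fin d → ℤ) → ℤ) (v : Fin d → ℤ) : Prop := ∀ u, c (u + v) = c u

/-- `c : ℤ^d → ℂ` is `v`-periodic. -/
def PeriodicC {d : ℕ} (c : (Fin d → ℤ) → ℂ) (v : Fin d → ℤ) : Prop := ∀ u, c (u + v) = c u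

/-- `c` is `k`-periodic: it has `k` periods that are linearly independent over `ℚ`. -/
def KPeriodic {d : ℕ} (k : ℕ) (c : (Fin d → ℤ) → ℤ) : Prop :=
  ∃ v : Fin k → (Fin d → ℤ),
    (LinearIndependent ℚ fun i => intVecQ (v i)) ∧ ∀ i, Periodic c (v i)

/-- `c` is strongly periodic: it is `d`-periodic. -/
def StronglyPeriodic {d : ℕ} (c : (Fin d → ℤ) → ℤ) : Prop := KPeriodic d c

/-- `c : ℤ^d → ℂ` is strongly periodic. -/
def StronglyPeriodicC {d : ℕ} (c : (Fin d → ℤ) → ℂ) : Prop :=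
  ∃ v : Fin d → (Fin d → ℤ),
    (LinearIndependent ℚ fun i => intVecQ (v i)) ∧ ∀ i, PeriodicC c (v i)

/-- Two nonzero integer vectors are non-parallel if they are linearly independent over `ℚ`. -/
def NonParallel {d : ℕ} (v w : Fin d → ℤ) : Prop :=
  LinearIndependent ℚ ![intVecQ v, intVecQ w]

/-- A line polynomial in direction `v`: a polynomial whose support contains at least two points
and is contained in `u + ℚv` for some `u ∈ ℤ^d`. -/
def IsLinePoly {d : ℕ} (f : (Fin d → ℤ) → ℤ) (v : Fin d → ℤ) : Prop :=
  IsPoly f ∧ v ≠ 0 ∧ 2 ≤ (Function.support f).ncard ∧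
    ∃ u : Fin d → ℤ, ∀ w ∈ Function.support f, ∃ q : ℚ, intVecQ w = intVecQ u + q • intVecQ v

/-- The difference polynomial `X^v − 1`: value `1` at `v`, value `−1` at `0`, and `0` elsewhere. -/
def diffPoly {d : ℕ} (v : Fin d → ℤ) : (Fin d → ℤ) → ℤ :=
  fun u => if u = v then 1 else if u = 0 then -1 else 0

/-- `c : ℤ^d → ℂ` is periodic in direction `v`: it is `kv`-periodic for some nonzero integer `k`. -/
def PeriodicInDirC {d : ℕ} (c : (Fin d → ℤ) → ℂ) (v : Fin d → ℤ) : Prop :=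
  ∃ k : ℤ, k ≠ 0 ∧ PeriodicC c (k • v)

/-- `c : ℤ^d → ℂ` is `V`-periodic for a linear subspace `V ⊆ ℝ^d`: it is periodic in
direction `v` for every nonzero integer vector `v` lying in `V`. -/
def VPeriodicC {d : ℕ} (V : Submodule ℝ (Fin d → ℝ)) (c : (Fin d → ℤ) → ℂ) : Prop :=
  ∀ v : Fin d → ℤ, v ≠ 0 → intVecR v ∈ V → PeriodicInDirC c v

/-- The discrete cube `C_m + t`. -/
def cube {d : ℕ} (m : ℕ) (t : Fin d → ℤ) : Set (Fin d → ℤ) :=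
  {u | ∀ i, |u i - t i| ≤ (m : ℤ)}

/-- `c : ℤ^d → ℤ` is sparse: for some positive integer `a`,
`|supp(c) ∩ (C_m + t)| ≤ a·m` for all positive `m` and all `t`. -/
def Sparse {d : ℕ} (c : (Fin d → ℤ) → ℤ) : Prop :=
  ∃ a : ℕ, 0 < a ∧ ∀ m : ℕ, 0 < m → ∀ t : Fin d → ℤ,
    (Function.support c ∩ cube m t).ncard ≤ a * m

/-- A `v`-fiber: a function whose support is contained in `w + ℚv` for some `w ∈ ℤ^d`. -/
def IsFiber {d : ℕ} (e : (Fin d → ℤ) → ℤ) (v : Fin d → ℤ) : Prop :=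
  ∃ w : Fin d → ℤ, ∀ x ∈ Function.support e, ∃ q : ℚ, intVecQ x = intVecQ w + q • intVecQ v

/-- `c` is a sum of finitely many periodic `v`-fibers. -/
def FinSumPeriodicFibers {d : ℕ} (v : Fin d → ℤ) (c : (Fin d → ℤ) → ℤ) : Prop :=
  ∃ (r : ℕ) (e : Fin r → ((Fin d → ℤ) → ℤ)), c = ∑ j, e j ∧
    ∀ j, IsFiber (e j) v ∧ ∃ w : Fin d → ℤ, w ≠ 0 ∧ Periodic (e j) w

end PaperFormal
/-! A bounded configuration killed by a line polynomial in direction `w` satisfies a linear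
recurrence along every line parallel to `w`, so finitely many integer sequences occur along these
lines, and the configuration is periodic in direction `w`. Applied to `ψc`, which `φ` kills, this
gives `P > 0` such that `ψc` is `Pv`-periodic. The difference of `c` and its translate by `Pv` is
then killed by `ψ`, hence periodic in direction `u`; being sparse, it is supported on finitely
many lines parallel to `u`, and a line in direction `v` meets each of them at most once. Therefore
the translates of `c` by `nPv` stabilise pointwise as `n → ∞`. Their limit `c₁` is sparse,
satisfies `ψc₁ = ψc` by periodicity of `ψc`, and `φc₁ = 0` because the translates of `φc`, which
`ψ` kills, tend to zero. Both `c₁` and `c₂ = c - c₁` are thus sparse and periodic, and sparsity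
cuts each into finitely many periodic fibers. -/

namespace PaperFormal

open Function Filter Topology
open scoped translate Pointwise

section Recurrence

variable {R : Type*}

theorem eq_zero_of_recurrence [NonUnitalNonAssocSemiring R] [NoZeroDivisors R] {α f : ℤ → R}
    {a b s : ℤ} (hab : a ≤ b) (ha : α a ≠ 0) (hb : α b ≠ 0)
    (hrec : ∀ t, ∑ k ∈ Finset.Icc a b, α k * f (t - k) = 0)
    (hs : ∀ j ∈ Set.Ico s (s + (b - a)), f j = 0) : f = 0 := by
  have eq_zero_of_others (t i : ℤ) (hi : i ∈ Finset.Icc a b) (hαi : α i ≠ 0)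
      (h : ∀ k ∈ Finset.Icc a b, k ≠ i → f (t - k) = 0) : f (t - i) = 0 := by
    have hsum := hrec t
    rw [Finset.sum_eq_single_of_mem i hi fun k hk hki ↦ by rw [h k hk hki, mul_zero]] at hsum
    exact (mul_eq_zero.mp hsum).resolve_left hαi
  have forward (r : ℤ) (hr : ∀ j ∈ Set.Ico r (r + (b - a)), f j = 0) : f (r + (b - a)) = 0 := by
    have := eq_zero_of_others (r + b) a (Finset.left_mem_Icc.mpr hab) ha fun k hk hka ↦ by
      rw [Finset.mem_Icc] at hk
      exact hr _ ⟨by lia, by lia⟩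
    rwa [add_sub_assoc] at this
  have backward (r : ℤ) (hr : ∀ j ∈ Set.Ico r (r + (b - a)), f j = 0) : f (r - 1) = 0 := by
    have := eq_zero_of_others (r - 1 + b) b (Finset.right_mem_Icc.mpr hab) hb fun k hk hkb ↦ by
      rw [Finset.mem_Icc] at hk
      exact hr _ ⟨by lia, by lia⟩
    rwa [add_sub_cancel_right] at this
  have window (r : ℤ) : ∀ j ∈ Set.Ico r (r + (b - a)), f j = 0 := by
    induction r using Int.inductionOn' (b := s) with
    | zero => exact hs
    | succ r _ ih =>
      rintro j ⟨hrj, hjr⟩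
      obtain hj | rfl : j < r + (b - a) ∨ j = r + (b - a) := by lia
      exacts [ih j ⟨by lia, hj⟩, forward r ih]
    | pred r _ ih =>
      rintro j ⟨hrj, hjr⟩
      obtain rfl | hj : j = r - 1 ∨ r ≤ j := by lia
      exacts [backward r ih, ih j ⟨hj, by lia⟩]
  ext t
  simpa using backward (t + 1) (window _)

theorem finite_setOf_recurrence [NonUnitalNonAssocRing R] [NoZeroDivisors R] {α : ℤ → R}
    (hα : (support α).Finite) (hα₀ : α ≠ 0) {V : Set R} (hV : V.Finite) :
    {f : ℤ → R | (∀ t, f t ∈ V) ∧ ∀ t, ∑ᶠ k, α k * f (t - k) = 0}.Finite := by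
  have hne : hα.toFinset.Nonempty := by simpa using hα₀
  set a := hα.toFinset.min' hne
  set b := hα.toFinset.max' hne
  have hsupp (f : ℤ → R) (t : ℤ) :
      ∑ᶠ k, α k * f (t - k) = ∑ k ∈ Finset.Icc a b, α k * f (t - k) :=
    finsum_eq_sum_of_support_subset _ fun k hk ↦ by
      have hαk : k ∈ hα.toFinset := by simpa using left_ne_zero_of_mul hk
      simpa using ⟨Finset.min'_le _ k hαk, Finset.le_max' _ k hαk⟩
  -- By linearity a solution is determined by its values on a window of length `b - a`.
  refine Set.Finite.of_injOn (f := fun f (j : Set.Ico 0 (0 + (b - a))) ↦ f j)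
    (t := {g | ∀ j, g j ∈ V}) (fun f hf j ↦ hf.1 j.1) ?_ (Set.Finite.pi' fun _ ↦ hV)
  rintro f ⟨-, hf⟩ f' ⟨-, hf'⟩ heq
  refine sub_eq_zero.mp (eq_zero_of_recurrence (a := a) (b := b) (s := 0)
    (Finset.min'_le_max' _ hne) (by simpa using hα.toFinset.min'_mem hne)
    (by simpa using hα.toFinset.max'_mem hne)
    (fun t ↦ ?_) fun j hj ↦ sub_eq_zero.mpr (congrFun heq ⟨j, hj⟩))
  simp only [Pi.sub_apply, mul_sub, Finset.sum_sub_distrib, ← hsupp, hf, hf', sub_zero]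

end Recurrence

theorem exists_common_period {G β : Type*} [AddGroup G] {X : Set (G → β)} (hX : X.Finite) (g : G)
    (hshift : ∀ f ∈ X, (fun x ↦ f (x + g)) ∈ X) :
    ∃ P : ℕ, 0 < P ∧ ∀ f ∈ X, Function.Periodic f (P • g) := by
  have : Finite X := hX
  let T : X → X := fun f ↦ ⟨_, hshift f f.2⟩
  have hT : Injective T := fun f f' h ↦ Subtype.ext <| funext fun x ↦ by
    simpa [T] using congrFun (congrArg Subtype.val h) (x - g)
  let σ : Equiv.Perm X := Equiv.ofBijective T (Finite.injective_iff_bijective.mp hT)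
  obtain ⟨P, hP, hσ⟩ := isOfFinOrder_iff_pow_eq_one.mp (isOfFinOrder_of_finite σ)
  have pow_apply (n : ℕ) (f : X) (x : G) : ((σ ^ n) f).1 x = f.1 (x + n • g) := by
    induction n generalizing x with
    | zero => simp
    | succ n ih =>
      rw [pow_succ', Equiv.Perm.mul_apply, succ_nsmul', ← add_assoc, ← ih]
      rfl
  exact ⟨P, hP, fun f hf x ↦
    (pow_apply P ⟨f, hf⟩ x).symm.trans (by rw [hσ, Equiv.Perm.one_apply])⟩

theorem finsum_eq_finsum_comp_of_support_subset_range {ι κ M : Type*} [AddCommMonoid M]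
    {f : κ → M} {g : ι → κ} (hg : Injective g) (hf : support f ⊆ Set.range g) :
    ∑ᶠ x, f x = ∑ᶠ i, f (g i) := by
  rw [← finsum_mem_range hg, ← finsum_mem_inter_support, Set.inter_eq_right.mpr hf,
    finsum_mem_support]

theorem sum_indicator_preimage_singleton {X Q M : Type*} [AddCommMonoid M] {f : X → M} {q : X → Q}
    {A : Finset Q} (hA : q '' support f ⊆ A) :
    ∑ z ∈ A, (q ⁻¹' {z}).indicator f = f := by
  classical
  ext x
  simp only [Finset.sum_apply, Set.indicator_apply, Set.mem_preimage, Set.mem_singleton_iff,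
    Finset.sum_ite_eq, ite_eq_left_iff]
  exact fun hx ↦ (by_contra fun hfx ↦ hx (hA ⟨x, Ne.symm hfx, rfl⟩))

theorem tendsto_nhds_pi_iff_eventually_eq {ι X β : Type*} [TopologicalSpace β] [DiscreteTopology β]
    {l : Filter ι} {F : ι → X → β} {f : X → β} :
    Tendsto F l (𝓝 f) ↔ ∀ x, ∀ᶠ i in l, F i x = f x := by
  simp only [tendsto_pi_nhds, nhds_discrete, tendsto_pure]

variable {d : ℕ}

section RationalLine

variable {v x y : Fin d → ℤ}

/-- The integer points of the rational line `ℚv`, as a subgroup of `ℤ^d`. -/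
def rationalLine (v : Fin d → ℤ) : AddSubgroup (Fin d → ℤ) :=
  (ℚ ∙ intVecQ v).toAddSubgroup.comap ((Int.castAddHom ℚ).compLeft (Fin d))

theorem mem_rationalLine : x ∈ rationalLine v ↔ ∃ q : ℚ, intVecQ x = q • intVecQ v :=
  Submodule.mem_span_singleton.trans (exists_congr fun _ ↦ eq_comm)

theorem sub_mem_rationalLine :
    x - y ∈ rationalLine v ↔ ∃ q : ℚ, intVecQ x = intVecQ y + q • intVecQ v := by
  have hsub : intVecQ (x - y) = intVecQ x - intVecQ y := by ext; simp [intVecQ]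
  simp only [mem_rationalLine, hsub, sub_eq_iff_eq_add']

theorem self_mem_rationalLine (v : Fin d → ℤ) : v ∈ rationalLine v :=
  Submodule.mem_span_singleton_self _

theorem isAddCyclic_rationalLine (hv : v ≠ 0) : IsAddCyclic (rationalLine v) := by
  obtain ⟨i, hi⟩ := Function.ne_iff.mp hv
  refine isAddCyclic_of_injective
    ((Pi.evalAddMonoidHom (fun _ ↦ ℤ) i).comp (rationalLine v).subtype)
    ((injective_iff_map_eq_zero _).mpr ?_)
  rintro ⟨x, hx⟩ (hxi : x i = 0)
  obtain ⟨q, hq⟩ := mem_rationalLine.mp hx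
  have hqv : q * v i = 0 := by simpa [intVecQ, hxi] using (congrFun hq i).symm
  obtain rfl : q = 0 := (mul_eq_zero.mp hqv).resolve_right (by exact_mod_cast hi)
  ext j
  simpa [intVecQ] using congrFun hq j

theorem exists_generator_rationalLine (hv : v ≠ 0) :
    ∃ g, ∀ x ∈ rationalLine v, ∃ n : ℤ, n • g = x := by
  obtain ⟨g, hg⟩ := (isAddCyclic_rationalLine hv).exists_zsmul_surjective
  refine ⟨g, fun x hx ↦ ?_⟩
  obtain ⟨n, hn⟩ := hg ⟨x, hx⟩
  exact ⟨n, congrArg Subtype.val hn⟩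

theorem NonParallel.eq_zero_of_zsmul_eq_zsmul {v u : Fin d → ℤ} (h : NonParallel v u) {m n : ℤ}
    (hmn : m • v = n • u) : m = 0 := by
  have hpair := (LinearIndependent.pair_iff.mp h) m (-n) <| by
    ext i
    have hi := congrFun hmn i
    simp only [Pi.smul_apply, smul_eq_mul] at hi
    simp only [intVecQ, Pi.add_apply, Pi.smul_apply, smul_eq_mul, Pi.zero_apply]
    rw [neg_mul, ← sub_eq_add_neg, sub_eq_zero]
    exact_mod_cast hi
  exact_mod_cast hpair.1

end RationalLine

section PolyApply

variable {f g c : (Fin d → ℤ) → ℤ}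

theorem polyApply_eq_sum (hf : IsPoly f) (c : (Fin d → ℤ) → ℤ) :
    polyApply f c = ∑ w ∈ hf.toFinset, f w • τ w c := by
  ext x
  rw [Finset.sum_apply]
  exact finsum_eq_sum_of_support_subset _ fun w hw ↦
    (Set.Finite.mem_toFinset hf).mpr (left_ne_zero_of_mul hw)

theorem polyApply_sub (hf : IsPoly f) (c e : (Fin d → ℤ) → ℤ) :
    polyApply f (c - e) = polyApply f c - polyApply f e := by
  simp only [polyApply_eq_sum hf, translate_sub_right, smul_sub, Finset.sum_sub_distrib]

theorem polyApply_translate (f c : (Fin d → ℤ) → ℤ) (w : Fin d → ℤ) :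
    polyApply f (τ w c) = τ w (polyApply f c) := by
  ext x
  simp only [polyApply, translate_apply, sub_right_comm]

theorem polyApply_comm (hf : IsPoly f) (hg : IsPoly g) (c : (Fin d → ℤ) → ℤ) :
    polyApply f (polyApply g c) = polyApply g (polyApply f c) := by
  simp only [polyApply_eq_sum hf, polyApply_eq_sum hg, translate_sum_right, translate_smul_right,
    Finset.smul_sum]
  rw [Finset.sum_comm]
  refine Finset.sum_congr rfl fun a _ ↦ Finset.sum_congr rfl fun b _ ↦ ?_
  rw [translate_comm, smul_comm]

theorem continuous_polyApply (hf : IsPoly f) : Continuous (polyApply f) := by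
  refine continuous_pi fun x ↦ ?_
  simp only [polyApply_eq_sum hf, Finset.sum_apply, Pi.smul_apply, translate_apply]
  fun_prop

theorem periodic_iff_translate_eq {w : Fin d → ℤ} : Periodic c w ↔ τ w c = c :=
  ⟨fun h ↦ funext (Function.Periodic.sub_eq h), fun h x ↦ by
    simpa using (congrFun h (x + w)).symm⟩

theorem exists_periodic_of_support_subset_range (hf : IsPoly f) (hf₀ : f ≠ 0) {b w : Fin d → ℤ}
    (hw : w ≠ 0) (hsupp : support f ⊆ Set.range fun k : ℤ ↦ b + k • w)
    (hc : (Set.range c).Finite) (hfc : polyApply f c = 0) :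
    ∃ P : ℕ, 0 < P ∧ Periodic c (P • w) := by
  have hinj : Injective fun k : ℤ ↦ b + k • w :=
    (add_right_injective b).comp (smul_left_injective ℤ hw)
  set α : ℤ → ℤ := fun k ↦ f (b + k • w)
  have hα : (support α).Finite := Set.Finite.preimage hinj.injOn hf
  have hα₀ : α ≠ 0 := by
    obtain ⟨x, hx⟩ := Function.ne_iff.mp hf₀
    obtain ⟨k, rfl⟩ := hsupp hx
    exact Function.ne_iff.mpr ⟨k, hx⟩
  let X : Set (ℤ → ℤ) := Set.range fun x t ↦ c (x + t • w)
  have hX : X.Finite := by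
    refine (finite_setOf_recurrence hα hα₀ hc).subset ?_
    rintro _ ⟨x, rfl⟩
    refine ⟨fun t ↦ Set.mem_range_self _, fun t ↦ ?_⟩
    have hx : polyApply f c (x + b + t • w) = 0 := congrFun hfc _
    rw [polyApply, finsum_eq_finsum_comp_of_support_subset_range hinj
      fun y hy ↦ hsupp (left_ne_zero_of_mul hy)] at hx
    rw [← hx]
    refine finsum_congr fun k ↦ ?_
    exact congrArg (fun y ↦ α k * c y) (by module)
  obtain ⟨P, hP, hper⟩ := exists_common_period hX 1 <| by
    rintro _ ⟨x, rfl⟩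
    exact ⟨x + w, funext fun t ↦ congrArg c (by module)⟩
  exact ⟨P, hP, fun x ↦ by simpa using hper _ ⟨x, rfl⟩ 0⟩

theorem IsLinePoly.exists_periodic {v : Fin d → ℤ} (hf : IsLinePoly f v)
    (hc : (Set.range c).Finite) (hfc : polyApply f c = 0) :
    ∃ P : ℕ, 0 < P ∧ Periodic c (P • v) := by
  obtain ⟨hpoly, hv, hcard, b, hb⟩ := hf
  obtain ⟨w, hw⟩ := exists_generator_rationalLine hv
  obtain ⟨m, rfl⟩ := hw v (self_mem_rationalLine v)
  obtain ⟨P, hP, hper⟩ := exists_periodic_of_support_subset_range (b := b) hpoly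
    (by rintro rfl; simp at hcard) (right_ne_zero_of_smul hv)
    (fun x hx ↦ by
      obtain ⟨k, hk⟩ := hw (x - b) (sub_mem_rationalLine.mpr (hb x hx))
      exact ⟨k, by simp [hk]⟩) hc hfc
  exact ⟨P, hP, smul_comm m P w ▸ Function.Periodic.zsmul hper m⟩

end PolyApply

section Sparse

variable {a b : ℕ} {c e : (Fin d → ℤ) → ℤ}

theorem mem_cube_iff_norm_le {m : ℕ} {t x : Fin d → ℤ} : x ∈ cube m t ↔ ‖x - t‖ ≤ m := by
  rw [pi_norm_le_iff_of_nonneg m.cast_nonneg]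
  refine forall_congr' fun i ↦ ?_
  rw [Int.norm_eq_abs]
  exact_mod_cast Iff.rfl

theorem cube_finite (m : ℕ) (t : Fin d → ℤ) : (cube m t).Finite := by
  have hball : cube m t = Metric.closedBall t m := by
    ext x
    rw [mem_cube_iff_norm_le, mem_closedBall_iff_norm]
  exact hball ▸ (isCompact_closedBall t m).finite_of_discrete

theorem exists_subset_cube {s : Set (Fin d → ℤ)} (hs : s.Finite) : ∃ m : ℕ, s ⊆ cube m 0 := by
  obtain ⟨C, hC⟩ := hs.isBounded.exists_norm_le
  obtain ⟨m, hm⟩ := exists_nat_ge C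
  exact ⟨m, fun x hx ↦ mem_cube_iff_norm_le.mpr <| by simpa using (hC x hx).trans hm⟩

theorem vadd_cube (m : ℕ) (t w : Fin d → ℤ) : w +ᵥ cube m t = cube m (w + t) := by
  ext x
  simp [Set.mem_vadd_set_iff_neg_vadd_mem, mem_cube_iff_norm_le, sub_eq_neg_add, add_assoc]

/-- `c` is sparse with constant `a`: every cube `C_m + t` with `0 < m` meets the support of `c` in
at most `a * m` points. The constant is exposed because pointwise limits preserve it. -/
def SparseWith (a : ℕ) (c : (Fin d → ℤ) → ℤ) : Prop :=
  ∀ m : ℕ, 0 < m → ∀ t : Fin d → ℤ, (support c ∩ cube m t).ncard ≤ a * m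

theorem SparseWith.zero (a : ℕ) : SparseWith a (0 : (Fin d → ℤ) → ℤ) := by
  intro m _ t
  simp

theorem SparseWith.neg (hc : SparseWith a c) : SparseWith a (-c) := by
  simpa only [SparseWith, Function.support_neg] using hc

theorem SparseWith.add (hc : SparseWith a c) (he : SparseWith b e) :
    SparseWith (a + b) (c + e) := by
  intro m hm t
  have hfin (s : Set (Fin d → ℤ)) : (s ∩ cube m t).Finite := (cube_finite m t).inter_of_right s
  calc (support (c + e) ∩ cube m t).ncard
      ≤ (support c ∩ cube m t ∪ support e ∩ cube m t).ncard := by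
        rw [← Set.union_inter_distrib_right]
        exact Set.ncard_le_ncard (Set.inter_subset_inter_left _ (support_add c e)) (hfin _)
    _ ≤ a * m + b * m := (Set.ncard_union_le _ _).trans (add_le_add (hc m hm t) (he m hm t))
    _ = (a + b) * m := (add_mul a b m).symm

theorem SparseWith.translate (hc : SparseWith a c) (w : Fin d → ℤ) : SparseWith a (τ w c) := by
  intro m hm t
  rw [support_translate, ← add_sub_cancel w t, ← vadd_cube, ← Set.vadd_set_inter,
    Set.ncard_vadd_set]
  exact hc m hm _

theorem SparseWith.of_tendsto {ι : Type*} {l : Filter ι} [l.NeBot] {F : ι → (Fin d → ℤ) → ℤ}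
    (hF : ∀ i, SparseWith a (F i)) (hlim : Tendsto F l (𝓝 c)) : SparseWith a c := by
  intro m hm t
  rw [tendsto_nhds_pi_iff_eventually_eq] at hlim
  obtain ⟨i, hi⟩ := ((cube_finite m t).eventually_all.mpr fun x _ ↦ hlim x).exists
  refine (Set.ncard_le_ncard ?_ ((cube_finite m t).inter_of_right _)).trans (hF i m hm t)
  rintro x ⟨hxc, hxt⟩
  exact ⟨by rwa [mem_support, hi x hxt], hxt⟩

variable (d) in
/-- The group of sparse configurations `ℤ^d → ℤ`: the sparse functions with finite range. -/
def sparseConfigurations : AddSubgroup ((Fin d → ℤ) → ℤ) where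
  carrier := {c | (Set.range c).Finite ∧ Sparse c}
  zero_mem' := ⟨Set.finite_range_const, 1, one_pos, SparseWith.zero 1⟩
  add_mem' := by
    rintro c e ⟨hc, a, ha, hca⟩ ⟨he, b, -, heb⟩
    refine ⟨(hc.add he).subset ?_, a + b, by lia, SparseWith.add hca heb⟩
    rintro _ ⟨x, rfl⟩
    exact Set.add_mem_add ⟨x, rfl⟩ ⟨x, rfl⟩
  neg_mem' := by
    rintro c ⟨hc, a, ha, hca⟩
    refine ⟨hc.neg.subset ?_, a, ha, SparseWith.neg hca⟩
    rintro _ ⟨x, rfl⟩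
    exact Set.neg_mem_neg.mpr ⟨x, rfl⟩

theorem translate_mem_sparseConfigurations (hc : c ∈ sparseConfigurations d) (w : Fin d → ℤ) :
    τ w c ∈ sparseConfigurations d := by
  obtain ⟨hfin, a, ha, hca⟩ := hc
  exact ⟨hfin.subset (Set.range_comp_subset_range _ c), a, ha, SparseWith.translate hca w⟩

theorem polyApply_mem_sparseConfigurations {f : (Fin d → ℤ) → ℤ} (hf : IsPoly f)
    (hc : c ∈ sparseConfigurations d) : polyApply f c ∈ sparseConfigurations d := by
  rw [polyApply_eq_sum hf]
  exact sum_mem fun w _ ↦ zsmul_mem (translate_mem_sparseConfigurations hc w) _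

theorem mem_sparseConfigurations_of_tendsto_translate {ι : Type*} {l : Filter ι} [l.NeBot]
    {w : ι → Fin d → ℤ} (hc : c ∈ sparseConfigurations d)
    (hlim : Tendsto (fun i ↦ τ (w i) c) l (𝓝 e)) : e ∈ sparseConfigurations d := by
  obtain ⟨hfin, a, ha, hca⟩ := hc
  refine ⟨hfin.subset ?_, a, ha,
    SparseWith.of_tendsto (fun i ↦ SparseWith.translate hca (w i)) hlim⟩
  rintro _ ⟨x, rfl⟩
  obtain ⟨i, hi⟩ := (tendsto_nhds_pi_iff_eventually_eq.mp hlim x).exists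
  exact ⟨_, hi⟩

end Sparse

section PeriodicSparse

variable {c : (Fin d → ℤ) → ℤ} {p : Fin d → ℤ}

theorem card_mul_le_ncard_support_inter_cube (hp : p ≠ 0) (hper : Periodic c p) {L m : ℕ}
    (hL : p ∈ cube L 0) {A : Finset (Fin d → ℤ)} (hA : ↑A ⊆ support c ∩ cube m 0)
    (hinj : Set.InjOn (QuotientAddGroup.mk : _ → (Fin d → ℤ) ⧸ AddSubgroup.zmultiples p) A) :
    A.card * (m + 1) ≤ (support c ∩ cube (m + m * L) 0).ncard := by
  rw [← Finset.card_range (m + 1), ← Finset.card_product, ← Set.ncard_coe_finset]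
  refine Set.ncard_le_ncard_of_injOn (fun z ↦ z.1 + z.2 • p) ?_ ?_
    ((cube_finite _ _).inter_of_right _)
  · rintro ⟨x, k⟩ hmem
    obtain ⟨hx, hk⟩ : x ∈ A ∧ k < m + 1 := by simpa using hmem
    have hxk : c (x + k • p) ≠ 0 := by
      rw [Function.Periodic.nsmul hper k x]
      exact (hA hx).1
    refine ⟨hxk, ?_⟩
    have hxm : ‖x‖ ≤ m := by simpa using mem_cube_iff_norm_le.mp (hA hx).2
    have hpL : ‖p‖ ≤ L := by simpa using mem_cube_iff_norm_le.mp hL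
    have hkm : (k : ℝ) ≤ m := by exact_mod_cast Nat.lt_succ_iff.mp hk
    rw [mem_cube_iff_norm_le, sub_zero]
    calc ‖x + k • p‖ ≤ ‖x‖ + k * ‖p‖ := norm_add_le_of_le le_rfl norm_nsmul_le
      _ ≤ m + m * L := by gcongr
      _ = ↑(m + m * L) := by push_cast; rfl
  · rintro ⟨x, k⟩ hxk ⟨y, n⟩ hyn (heq : x + k • p = y + n • p)
    have hxA : x ∈ A := (Finset.mem_product.mp hxk).1
    have hyA : y ∈ A := (Finset.mem_product.mp hyn).1
    have hdiff : ((n : ℤ) - k) • p = x - y := by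
      rw [sub_smul, natCast_zsmul, natCast_zsmul, sub_eq_sub_iff_add_eq_add, add_comm _ y, heq]
    obtain rfl : x = y := hinj hxA hyA (QuotientAddGroup.eq_iff_sub_mem.mpr ⟨_, hdiff⟩)
    have hnk : (n : ℤ) - k = 0 := by
      rw [sub_self] at hdiff
      exact (smul_eq_zero.mp hdiff).resolve_right hp
    rw [show k = n by lia]

theorem Sparse.finite_image_mk_support (hc : Sparse c) (hp : p ≠ 0) (hper : Periodic c p) :
    ((QuotientAddGroup.mk : _ → (Fin d → ℤ) ⧸ AddSubgroup.zmultiples p) '' support c).Finite := by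
  obtain ⟨a, -, hca⟩ := hc
  obtain ⟨s, hsc, hs⟩ := Set.exists_subset_bijOn (support c)
    (QuotientAddGroup.mk : _ → (Fin d → ℤ) ⧸ AddSubgroup.zmultiples p)
  rw [← hs.image_eq, Set.finite_image_iff hs.injOn]
  by_contra hinf
  obtain ⟨L, hL⟩ := exists_subset_cube (Set.finite_singleton p)
  obtain ⟨A, hAs, hAcard⟩ := Set.Infinite.exists_subset_card_eq hinf (a * (1 + L) + 1)
  obtain ⟨m, hm⟩ := exists_subset_cube A.finite_toSet
  have hm' : (A : Set _) ⊆ cube (m + 1) 0 := fun x hx i ↦ (hm hx i).trans (by simp)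
  have hlower := card_mul_le_ncard_support_inter_cube hp hper (hL rfl)
    (Set.subset_inter (hAs.trans hsc) hm') (hs.injOn.mono hAs)
  have hupper := hca (m + 1 + (m + 1) * L) (by positivity) 0
  rw [hAcard] at hlower
  nlinarith

theorem Sparse.finSumPeriodicFibers {v : Fin d → ℤ} (hc : Sparse c) (hp : p ≠ 0)
    (hper : Periodic c p) (hpv : p ∈ rationalLine v) : FinSumPeriodicFibers v c := by
  have hfin := hc.finite_image_mk_support hp hper
  set A := hfin.toFinset
  let fiber (z : (Fin d → ℤ) ⧸ AddSubgroup.zmultiples p) : (Fin d → ℤ) → ℤ :=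
    (QuotientAddGroup.mk ⁻¹' {z}).indicator c
  refine ⟨A.card, fun j ↦ fiber (A.equivFin.symm j), ?_, fun j ↦ ?_⟩
  · rw [Equiv.sum_comp A.equivFin.symm fun z ↦ fiber z, Finset.sum_coe_sort A fiber]
    exact (sum_indicator_preimage_singleton hfin.coe_toFinset.superset).symm
  obtain ⟨w, hw⟩ := QuotientAddGroup.mk_surjective (A.equivFin.symm j).1
  refine ⟨⟨w, fun x hx ↦ ?_⟩, p, hp, fun x ↦ ?_⟩
  · have hxw : (x : (Fin d → ℤ) ⧸ AddSubgroup.zmultiples p) = w :=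
      (Set.mem_of_indicator_ne_zero hx).trans hw.symm
    have hmem := QuotientAddGroup.eq_iff_sub_mem.mp hxw
    exact sub_mem_rationalLine.mp ((AddSubgroup.zmultiples_le.mpr hpv) hmem)
  · have hmk : ((x + p : Fin d → ℤ) : (Fin d → ℤ) ⧸ AddSubgroup.zmultiples p) = x :=
      QuotientAddGroup.mk_add_of_mem x (AddSubgroup.mem_zmultiples p)
    simp only [fiber, Set.indicator, Set.mem_preimage, hmk, hper x]

theorem IsLinePoly.finSumPeriodicFibers {f : (Fin d → ℤ) → ℤ} {v : Fin d → ℤ}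
    (hf : IsLinePoly f v) (hc : c ∈ sparseConfigurations d) (hfc : polyApply f c = 0) :
    FinSumPeriodicFibers v c := by
  obtain ⟨P, hP, hper⟩ := hf.exists_periodic hc.1 hfc
  exact Sparse.finSumPeriodicFibers hc.2 (smul_ne_zero hP.ne' hf.2.1) hper
    (nsmul_mem (self_mem_rationalLine v) P)

end PeriodicSparse

section TranslateLimit

theorem exists_tendsto_translate {G β : Type*} [AddCommGroup G] [AddGroup β] [TopologicalSpace β]
    [DiscreteTopology β] {c : G → β} {w : G}
    (h : Tendsto (fun n : ℕ ↦ τ (n • w) (τ w c - c)) atTop (𝓝 0)) :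
    ∃ c', Tendsto (fun n : ℕ ↦ τ (n • w) c) atTop (𝓝 c') := by
  simp only [tendsto_nhds_pi_iff_eventually_eq] at h ⊢
  suffices ∀ x, ∃ y, ∀ᶠ n : ℕ in atTop, τ (n • w) c x = y by
    choose c' hc' using this
    exact ⟨c', hc'⟩
  intro x
  obtain ⟨N, hN⟩ := eventually_atTop.mp (h x)
  have hconst : EventuallyConst (fun n : ℕ ↦ τ (n • w) c x) atTop :=
    eventuallyConst_atTop_nat.mpr ⟨N, fun n hn ↦ by
      rw [succ_nsmul, translate_add]
      exact sub_eq_zero.mp (hN n hn)⟩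
  exact hconst.exists_tendsto.imp fun y hy ↦ tendsto_pure.mp hy

variable {c e f : (Fin d → ℤ) → ℤ} {v u w : Fin d → ℤ}

theorem tendsto_translate_polyApply {ι : Type*} {l : Filter ι} {w : ι → Fin d → ℤ} (hf : IsPoly f)
    (hlim : Tendsto (fun i ↦ τ (w i) c) l (𝓝 e)) :
    Tendsto (fun i ↦ τ (w i) (polyApply f c)) l (𝓝 (polyApply f e)) := by
  simpa only [Function.comp_def, polyApply_translate] using
    ((continuous_polyApply hf).tendsto e).comp hlim

theorem tendsto_translate_of_periodic (hw : Periodic c w) :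
    Tendsto (fun n : ℕ ↦ τ (n • w) c) atTop (𝓝 c) := by
  have hconst (n : ℕ) : τ (n • w) c = c :=
    periodic_iff_translate_eq.mp (Function.Periodic.nsmul hw n)
  simp only [hconst, tendsto_const_nhds]

theorem Sparse.tendsto_translate_zero {p : Fin d → ℤ} (hc : Sparse c) (hp : p ≠ 0)
    (hper : Periodic c p) (hw : ∀ n : ℤ, n • w ∈ AddSubgroup.zmultiples p → n = 0) :
    Tendsto (fun n : ℕ ↦ τ (n • w) c) atTop (𝓝 0) := by
  refine tendsto_nhds_pi_iff_eventually_eq.mpr fun x ↦ ?_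
  have hfin : {n : ℕ | c (x - n • w) ≠ 0}.Finite := by
    refine Set.Finite.of_injOn
      (f := fun n : ℕ ↦ ((x - n • w : Fin d → ℤ) : (Fin d → ℤ) ⧸ AddSubgroup.zmultiples p))
      (fun n hn ↦ Set.mem_image_of_mem _ hn) (fun m _ n _ hmn ↦ ?_)
      (hc.finite_image_mk_support hp hper)
    have hdiff : ((n : ℤ) - m) • w = x - m • w - (x - n • w) := by
      rw [sub_smul, natCast_zsmul, natCast_zsmul]
      abel
    have := hw (n - m) (hdiff ▸ QuotientAddGroup.eq_iff_sub_mem.mp hmn)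
    lia
  rw [← Nat.cofinite_eq_atTop]
  simpa using hfin.eventually_cofinite_notMem

theorem IsLinePoly.tendsto_translate_zero (hf : IsLinePoly f u) (hvu : NonParallel v u)
    (hc : c ∈ sparseConfigurations d) (hfc : polyApply f c = 0) {P : ℕ} (hP : P ≠ 0) :
    Tendsto (fun n : ℕ ↦ τ (n • P • v) c) atTop (𝓝 0) := by
  obtain ⟨Q, hQ, hper⟩ := hf.exists_periodic hc.1 hfc
  refine Sparse.tendsto_translate_zero hc.2 (smul_ne_zero hQ.ne' hf.2.1) hper ?_
  rintro n ⟨k, hk : k • Q • u = n • P • v⟩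
  have hnP : n * P = 0 := hvu.eq_zero_of_zsmul_eq_zsmul (n := k * Q) <| by
    simpa only [mul_smul, natCast_zsmul] using hk.symm
  simpa [hP] using hnP

end TranslateLimit

/-- A sparse configuration annihilated by the product `φψ` of two line
polynomials in non-parallel directions `v` and `u` splits as `c = c₁ + c₂` where `c₁` is a
finite sum of periodic `v`-fibers with `φc₁ = 0` and `c₂` is a finite sum of periodic
`u`-fibers with `ψc₂ = 0`. -/
theorem sparse_two_line_polynomial_decomposition
    {d : ℕ} (c : (Fin d → ℤ) → ℤ) (hconf : (Set.range c).Finite) (hsparse : Sparse c)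
    (φ ψ : (Fin d → ℤ) → ℤ) (v u : Fin d → ℤ)
    (hφ : IsLinePoly φ v) (hψ : IsLinePoly ψ u)
    (hnp : NonParallel v u)
    (hann : polyApply φ (polyApply ψ c) = 0) :
    ∃ c₁ c₂ : (Fin d → ℤ) → ℤ, c = c₁ + c₂ ∧
      FinSumPeriodicFibers v c₁ ∧ polyApply φ c₁ = 0 ∧
      FinSumPeriodicFibers u c₂ ∧ polyApply ψ c₂ = 0 := by
  have hc : c ∈ sparseConfigurations d := ⟨hconf, hsparse⟩
  obtain ⟨P, hP, hper⟩ := hφ.exists_periodic (polyApply_mem_sparseConfigurations hψ.1 hc).1 hann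
  have hdiff : polyApply ψ (translate (P • v) c - c) = 0 := by
    rw [polyApply_sub hψ.1, polyApply_translate, periodic_iff_translate_eq.mp hper, sub_self]
  obtain ⟨c₁, hlim⟩ := exists_tendsto_translate <| hψ.tendsto_translate_zero hnp
    (sub_mem (translate_mem_sparseConfigurations hc _) hc) hdiff hP.ne'
  have hφc₁ : polyApply φ c₁ = 0 :=
    tendsto_nhds_unique (tendsto_translate_polyApply hφ.1 hlim) <|
      hψ.tendsto_translate_zero hnp (polyApply_mem_sparseConfigurations hφ.1 hc)
        (polyApply_comm hψ.1 hφ.1 c ▸ hann) hP.ne'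
  have hψc₁ : polyApply ψ c₁ = polyApply ψ c :=
    tendsto_nhds_unique (tendsto_translate_polyApply hψ.1 hlim) (tendsto_translate_of_periodic hper)
  have hψc₂ : polyApply ψ (c - c₁) = 0 := by rw [polyApply_sub hψ.1, hψc₁, sub_self]
  have hc₁ : c₁ ∈ sparseConfigurations d := mem_sparseConfigurations_of_tendsto_translate hc hlim
  exact ⟨c₁, c - c₁, (add_sub_cancel c₁ c).symm, hφ.finSumPeriodicFibers hc₁ hφc₁, hφc₁,
    hψ.finSumPeriodicFibers (sub_mem hc hc₁) hψc₂, hψc₂⟩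

end PaperFormal
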